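/- arXiv:2501.13143 — 2 statements merged into one kernel-verified Lean document; each statement's English description precedes it below -/
import Mathlib

section
/- Let S be a finite set with at least two elements, ν a capacity on S with ν(S) = 1, and V the Choquet integral with respect to ν. Suppose V(y ∘ σ) = V(y) for every permutation σ of S and every nonnegative profile y : S → [0,∞) (the symmetry assumption), and suppose Δ_{ω₁,ω₂}ν(A) ≥ 0 for every A ⊆ S and all distinct ω₁, ω₂ ∈ S. Then V is ambiguity averse. -/
open MeasureTheory

/-- The Choquet integral of a nonnegative profile `y` with respect to a capacity `ν`:
`V(y) = ∫₀^∞ ν({ω : y ω ≥ t}) dt`. -/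
noncomputable def choquet {Ω : Type*} [Fintype Ω] (ν : Finset Ω → ℝ) (y : Ω → ℝ) : ℝ :=
  ∫ t in Set.Ioi (0 : ℝ), ν (Finset.univ.filter fun ω => t ≤ y ω)

/-- Ambiguity aversion for a functional on nonnegative profiles over a finite state space. -/
def AmbiguityAverseC {Ω : Type*} [DecidableEq Ω] (V : (Ω → ℝ) → ℝ) : Prop :=
  ∀ (E : Finset Ω) (ω₁ ω₂ : Ω) (u₁ u₂ ub : ℝ) (y : Ω → ℝ),
    ω₁ ∉ E → ω₂ ∉ E → ω₁ ≠ ω₂ →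
    u₁ < u₂ → 0 < ub → 2 * ub < u₂ - u₁ → 0 ≤ u₁ - ub →
    (∀ ω, 0 ≤ y ω) →
    y ω₁ = u₁ → y ω₂ = u₂ →
    (∀ ω ∈ E, y ω < u₁ - ub) →
    (∀ ω, ω ∉ E → ω ≠ ω₁ → ω ≠ ω₂ → u₂ + ub < y ω) →
    V (Function.update (Function.update y ω₁ (u₁ + ub)) ω₂ (u₂ - ub)) ≥
      V (Function.update (Function.update y ω₁ (u₁ - ub)) ω₂ (u₂ + ub))

/-- Ambiguity prudence for a functional on nonnegative profiles over a finite state space. -/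
def AmbiguityPrudentC {Ω : Type*} [DecidableEq Ω] (V : (Ω → ℝ) → ℝ) : Prop :=
  ∀ (E : Finset Ω) (ω₁ ω₂ ω₃ : Ω) (u₁ u₂ u₃ ub : ℝ) (y : Ω → ℝ),
    ω₁ ∉ E → ω₂ ∉ E → ω₃ ∉ E →
    ω₁ ≠ ω₂ → ω₁ ≠ ω₃ → ω₂ ≠ ω₃ →
    u₁ < u₂ → u₂ < u₃ → u₂ - u₁ = u₃ - u₂ →
    0 < ub → 3 * ub < u₂ - u₁ → 0 ≤ u₁ - ub →
    (∀ ω, 0 ≤ y ω) →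
    y ω₁ = u₁ → y ω₂ = u₂ → y ω₃ = u₃ →
    (∀ ω ∈ E, y ω < u₁ - ub) →
    (∀ ω, ω ∉ E → ω ≠ ω₁ → ω ≠ ω₂ → ω ≠ ω₃ → u₃ + ub < y ω) →
    V (Function.update (Function.update (Function.update y ω₁ (u₁ + ub)) ω₂ (u₂ - 2 * ub)) ω₃ (u₃ + ub)) ≥
      V (Function.update (Function.update (Function.update y ω₁ (u₁ - ub)) ω₂ (u₂ + 2 * ub)) ω₃ (u₃ - ub))

/-- Second derivative of a set function. -/
def secondDeriv {Ω : Type*} [DecidableEq Ω] (ν : Finset Ω → ℝ) (ω₁ ω₂ : Ω) (A : Finset Ω) : ℝ :=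
  ν (A ∪ {ω₁, ω₂}) - ν ((A ∪ {ω₁}) \ {ω₂}) - ν ((A ∪ {ω₂}) \ {ω₁}) + ν (A \ {ω₁, ω₂})

/-- Third derivative of a set function. -/
def thirdDeriv {Ω : Type*} [DecidableEq Ω] (ν : Finset Ω → ℝ) (ω₁ ω₂ ω₃ : Ω) (A : Finset Ω) : ℝ :=
  ∑ C ∈ ({ω₁, ω₂, ω₃} : Finset Ω).powerset,
    (-1 : ℝ) ^ (3 - C.card) * ν ((A \ {ω₁, ω₂, ω₃}) ∪ C)

/-!
A Choquet integral changes linearly when the payoff of one state `ω` moves within an interval that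
contains no other payoff: the slope is the marginal contribution `ν (F ∪ {ω}) - ν F`, where `F` is
the set of states ranked above `ω`. Going from `y_A` to `y_B` therefore gains `2ū` times the
marginal contribution of `ω₁` over `F ∪ {ω₂}` and loses `2ū` times that of `ω₂` over `F`. Symmetry
gives `ν (F ∪ {ω₁}) = ν (F ∪ {ω₂})`, so the balance is exactly `2ū · Δ_{ω₁,ω₂} ν(F) ≥ 0`.
-/

lemma setIntegral_Ioi_indicator_Ioc {E : Type*} [NormedAddCommGroup E] [NormedSpace ℝ E]
    [CompleteSpace E] {l a b : ℝ} (hl : l ≤ a) (hab : a ≤ b) (c : E) :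
    ∫ t in Set.Ioi l, (Set.Ioc a b).indicator (fun _ => c) t = (b - a) • c := by
  have hsub : Set.Ioc a b ⊆ Set.Ioi l := fun t ht => hl.trans_lt ht.1
  rw [setIntegral_indicator measurableSet_Ioc, Set.inter_eq_self_of_subset_right hsub,
    setIntegral_const, Real.volume_real_Ioc_of_le hab]

section Choquet

variable {Ω : Type*} [Fintype Ω] {ν : Finset Ω → ℝ}

lemma measurable_comp_superlevel {α β : Type*} [LinearOrder α] [TopologicalSpace α]
    [ClosedIicTopology α] [MeasurableSpace α] [OpensMeasurableSpace α] [MeasurableSpace β]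
    (f : Finset Ω → β) (y : Ω → α) : Measurable fun t : α => f {ω | t ≤ y ω} := by
  let : MeasurableSpace (Finset Ω) := ⊤
  have hlevel : Measurable fun t : α => ({ω | t ≤ y ω} : Finset Ω) := by
    refine measurable_to_countable' fun A => ?_
    have hpre : (fun t : α => ({ω | t ≤ y ω} : Finset Ω)) ⁻¹' {A} =
        {t | ∀ ω, t ≤ y ω ↔ ω ∈ A} := by
      ext t
      simp [Finset.ext_iff]
    rw [hpre]
    exact measurableSet_setOfPred.2 (.forall fun ω =>
      (measurableSet_setOfPred.1 measurableSet_Iic).iff measurable_const)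
  exact measurable_from_top.comp hlevel

lemma integrableOn_comp_superlevel (hν0 : ν ∅ = 0) (y : Ω → ℝ) (l : ℝ) :
    IntegrableOn (fun t : ℝ => ν {ω | t ≤ y ω}) (Set.Ioi l) := by
  obtain ⟨M, hM⟩ : ∃ M, ∀ ω, y ω ≤ M := Finite.exists_le y
  obtain ⟨C, hC⟩ : ∃ C, ∀ A, ‖ν A‖ ≤ C := Finite.exists_le fun A => ‖ν A‖
  have hbounded : IntegrableOn (fun t : ℝ => ν {ω | t ≤ y ω}) (Set.Ioc l M) :=
    Measure.integrableOn_of_bounded measure_Ioc_lt_top.ne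
      (measurable_comp_superlevel ν y).aestronglyMeasurable (ae_of_all _ fun _ => hC _)
  refine hbounded.of_forall_sdiff_eq_zero measurableSet_Ioi fun t ⟨hlt, htM⟩ => ?_
  have hMt : M < t := not_le.1 fun h => htM ⟨hlt, h⟩
  rw [Finset.filter_false_of_mem fun ω _ => ((hM ω).trans_lt hMt).not_ge, hν0]

lemma choquet_indicator (hν0 : ν ∅ = 0) (A : Finset Ω) {c : ℝ} (hc : 0 ≤ c) :
    choquet ν ((A : Set Ω).indicator fun _ => c) = c * ν A := by
  have hlevel : Set.EqOn (fun t : ℝ => ν {ω | t ≤ (A : Set Ω).indicator (fun _ => c) ω})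
      ((Set.Ioc 0 c).indicator fun _ => ν A) (Set.Ioi 0) := by
    intro t (ht : 0 < t)
    by_cases htc : t ≤ c
    · have hA : ({ω | t ≤ (A : Set Ω).indicator (fun _ => c) ω} : Finset Ω) = A := by
        ext ω
        by_cases hω : ω ∈ A <;> simp [hω, htc, ht]
      simp [hA, ht, htc]
    · have hempty : ({ω | t ≤ (A : Set Ω).indicator (fun _ => c) ω} : Finset Ω) = ∅ := by
        ext ω
        by_cases hω : ω ∈ A <;> simp [hω, not_le.1 htc, ht]
      simp [hempty, htc, hν0]
  rw [choquet, setIntegral_congr_fun measurableSet_Ioi hlevel,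
    setIntegral_Ioi_indicator_Ioc le_rfl hc, sub_zero, smul_eq_mul]

lemma apply_map_perm_of_choquet_comp_perm (hν0 : ν ∅ = 0) (σ : Equiv.Perm Ω)
    (hσ : ∀ y : Ω → ℝ, (∀ ω, 0 ≤ y ω) → choquet ν (fun ω => y (σ ω)) = choquet ν y)
    (A : Finset Ω) : ν (A.map σ.toEmbedding) = ν A := by
  have hcomp : (fun ω => ((A.map σ.toEmbedding : Finset Ω) : Set Ω).indicator
      (fun _ => (1 : ℝ)) (σ ω)) = (A : Set Ω).indicator fun _ => 1 := by
    classical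
    ext ω
    simp [Set.indicator_apply]
  have h := hσ (((A.map σ.toEmbedding : Finset Ω) : Set Ω).indicator fun _ => 1)
    fun _ => Set.indicator_nonneg (fun _ _ => zero_le_one) _
  rw [hcomp, choquet_indicator hν0 _ zero_le_one, choquet_indicator hν0 _ zero_le_one] at h
  linarith

variable [DecidableEq Ω]

lemma superlevel_update_of_mem_Ioc {α : Type*} [LinearOrder α] {y : Ω → α} {ω : Ω}
    {F : Finset Ω} {a b t : α} (hω : ω ∉ F) (hF : ∀ i ∈ F, b ≤ y i)
    (hFc : ∀ i ∉ F, i ≠ ω → y i ≤ a) (ht : t ∈ Set.Ioc a b) (c : α) :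
    ({i | t ≤ Function.update y ω c i} : Finset Ω) = if t ≤ c then insert ω F else F := by
  obtain ⟨hat, htb⟩ := ht
  ext i
  grind [Function.update_apply]

lemma superlevel_update_of_notMem_Ioc {α : Type*} [LinearOrder α] (y : Ω → α) (ω : Ω)
    {a b t : α} (hab : a ≤ b) (ht : t ∉ Set.Ioc a b) :
    ({i | t ≤ Function.update y ω b i} : Finset Ω) =
      ({i | t ≤ Function.update y ω a i} : Finset Ω) := by
  ext i
  grind [Function.update_apply]

lemma choquet_update_sub_choquet_update (hν0 : ν ∅ = 0) {y : Ω → ℝ} {ω : Ω} {F : Finset Ω}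
    {a b : ℝ} (ha : 0 ≤ a) (hab : a ≤ b) (hω : ω ∉ F) (hF : ∀ i ∈ F, b ≤ y i)
    (hFc : ∀ i ∉ F, i ≠ ω → y i ≤ a) :
    choquet ν (Function.update y ω b) - choquet ν (Function.update y ω a) =
      (b - a) * (ν (insert ω F) - ν F) := by
  have hdiff (t : ℝ) : ν {i | t ≤ Function.update y ω b i} - ν {i | t ≤ Function.update y ω a i} =
      (Set.Ioc a b).indicator (fun _ => ν (insert ω F) - ν F) t := by
    by_cases ht : t ∈ Set.Ioc a b
    · rw [Set.indicator_of_mem ht, superlevel_update_of_mem_Ioc hω hF hFc ht,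
        superlevel_update_of_mem_Ioc hω hF hFc ht, if_pos ht.2, if_neg ht.1.not_ge]
    · rw [Set.indicator_of_notMem ht, superlevel_update_of_notMem_Ioc y ω hab ht, sub_self]
  rw [choquet, choquet, ← integral_sub (integrableOn_comp_superlevel hν0 _ 0)
    (integrableOn_comp_superlevel hν0 _ 0)]
  simp_rw [hdiff]
  rw [setIntegral_Ioi_indicator_Ioc ha hab, smul_eq_mul]

lemma choquet_update_update_sub_choquet_update_update (hν0 : ν ∅ = 0) {y : Ω → ℝ} {ω₁ ω₂ : Ω}
    {F : Finset Ω} {a₁ b₁ a₂ b₂ : ℝ} (ha₁ : 0 ≤ a₁) (h₁ : a₁ ≤ b₁) (h₁₂ : b₁ ≤ a₂)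
    (h₂ : a₂ ≤ b₂) (hω : ω₁ ≠ ω₂) (hω₁ : ω₁ ∉ F) (hω₂ : ω₂ ∉ F) (hF : ∀ i ∈ F, b₂ ≤ y i)
    (hFc : ∀ i ∉ F, i ≠ ω₁ → i ≠ ω₂ → y i ≤ a₁) :
    choquet ν (Function.update (Function.update y ω₁ b₁) ω₂ a₂) -
        choquet ν (Function.update (Function.update y ω₁ a₁) ω₂ b₂) =
      (b₁ - a₁) * (ν (insert ω₁ (insert ω₂ F)) - ν (insert ω₂ F)) -
        (b₂ - a₂) * (ν (insert ω₂ F) - ν F) := by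
  have hraise₁ := choquet_update_sub_choquet_update hν0 (y := Function.update y ω₂ a₂)
    (ω := ω₁) (F := insert ω₂ F) ha₁ h₁ (by grind) (by grind [Function.update_apply])
    (by grind [Function.update_apply])
  have hraise₂ := choquet_update_sub_choquet_update hν0 (y := Function.update y ω₁ a₁)
    (ω := ω₂) (F := F) (ha₁.trans (h₁.trans h₁₂)) h₂ hω₂ (by grind [Function.update_apply])
    (by grind [Function.update_apply])
  rw [Function.update_comm hω.symm, Function.update_comm hω.symm] at hraise₁
  linarith

end Choquet

section SetFunction

variable {Ω : Type*} [DecidableEq Ω]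

lemma map_swap_insert_of_notMem {ω₁ ω₂ : Ω} {F : Finset Ω} (hω₁ : ω₁ ∉ F) (hω₂ : ω₂ ∉ F) :
    (insert ω₁ F).map (Equiv.swap ω₁ ω₂).toEmbedding = insert ω₂ F := by
  have hfix : F.map (Equiv.swap ω₁ ω₂).toEmbedding = F := by
    ext i
    simp only [Finset.mem_map_equiv, Equiv.symm_swap]
    grind
  rw [Finset.map_insert, hfix, Equiv.coe_toEmbedding, Equiv.swap_apply_left]

lemma secondDeriv_of_notMem (ν : Finset Ω → ℝ) {ω₁ ω₂ : Ω} {F : Finset Ω} (hω : ω₁ ≠ ω₂)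
    (hω₁ : ω₁ ∉ F) (hω₂ : ω₂ ∉ F) :
    secondDeriv ν ω₁ ω₂ F =
      ν (insert ω₁ (insert ω₂ F)) - ν (insert ω₁ F) - ν (insert ω₂ F) + ν F := by
  have hboth : F ∪ {ω₁, ω₂} = insert ω₁ (insert ω₂ F) := by grind
  have hfst : (F ∪ {ω₁}) \ {ω₂} = insert ω₁ F := by grind
  have hsnd : (F ∪ {ω₂}) \ {ω₁} = insert ω₂ F := by grind
  have hnone : F \ {ω₁, ω₂} = F := by grind
  rw [secondDeriv, hboth, hfst, hsnd, hnone]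

end SetFunction

theorem CEU_secondDeriv_nonneg_implies_ambiguityAverse_general
    {Ω : Type*} [Fintype Ω] [DecidableEq Ω] {ν : Finset Ω → ℝ} (hν0 : ν ∅ = 0)
    (hsym : ∀ (σ : Equiv.Perm Ω) (y : Ω → ℝ), (∀ ω, 0 ≤ y ω) →
      choquet ν (fun ω => y (σ ω)) = choquet ν y)
    (hd2 : ∀ (A : Finset Ω) (ω₁ ω₂ : Ω), ω₁ ≠ ω₂ → 0 ≤ secondDeriv ν ω₁ ω₂ A) :
    AmbiguityAverseC (choquet ν) := by
  intro E ω₁ ω₂ u₁ u₂ ub y _ _ hω _ hub h2ub hpos _ _ _ hE hF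
  let F : Finset Ω := {ω | ω ∉ E ∧ ω ≠ ω₁ ∧ ω ≠ ω₂}
  have hω₁ : ω₁ ∉ F := by simp [F]
  have hω₂ : ω₂ ∉ F := by simp [F]
  have hswap : ν (insert ω₁ F) = ν (insert ω₂ F) := by
    rw [← map_swap_insert_of_notMem hω₁ hω₂,
      apply_map_perm_of_choquet_comp_perm hν0 _ (hsym _)]
  have hΔ := hd2 F ω₁ ω₂ hω
  rw [secondDeriv_of_notMem ν hω hω₁ hω₂, hswap] at hΔ
  have hV := choquet_update_update_sub_choquet_update_update hν0 (y := y) (F := F)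
    (a₁ := u₁ - ub) (b₁ := u₁ + ub) (a₂ := u₂ - ub) (b₂ := u₂ + ub) hpos
    (by linarith) (by linarith) (by linarith) hω hω₁ hω₂ (by grind) (by grind)
  have hgain := mul_nonneg (mul_nonneg zero_le_two hub.le) hΔ
  linarith

/-- If the Choquet integral of a capacity ν (with ν(S)=1) is symmetric under
permutations of the states (on nonnegative profiles) and the second derivative of ν is
nonnegative, then the Choquet integral is ambiguity averse. -/
theorem CEU_secondDeriv_nonneg_implies_ambiguityAverse
    {Ω : Type*} [Fintype Ω] [DecidableEq Ω]
    (hcard : 2 ≤ Fintype.card Ω)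
    (ν : Finset Ω → ℝ) (hν0 : ν ∅ = 0) (hν1 : ν Finset.univ = 1)
    (hmono : ∀ A B : Finset Ω, A ⊆ B → ν A ≤ ν B)
    (hsym : ∀ (σ : Equiv.Perm Ω) (y : Ω → ℝ), (∀ ω, 0 ≤ y ω) →
      choquet ν (fun ω => y (σ ω)) = choquet ν y)
    (hd2 : ∀ (A : Finset Ω) (ω₁ ω₂ : Ω), ω₁ ≠ ω₂ → 0 ≤ secondDeriv ν ω₁ ω₂ A) :
    AmbiguityAverseC (choquet ν) :=
  CEU_secondDeriv_nonneg_implies_ambiguityAverse_general hν0 hsym hd2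
end

section
/- Let S be a finite set with at least three elements, ν a capacity on S with ν(S) = 1, and V the Choquet integral with respect to ν. If V is ambiguity prudent, then Δ_{ω₁,ω₂,ω₃}ν(A) ≥ 0 for every A ⊆ S and all distinct ω₁, ω₂, ω₃ ∈ S. -/
open MeasureTheory

/-!
Raising one state within a gap of the ranking changes the Choquet integral linearly, at the rate of
that state's marginal contribution to the event ranked above it. In the prudence comparison
`ω₁` rises by `2ū`, `ω₂` falls by `4ū` and `ω₃` rises by `2ū`, so with `F` the event ranked above
`ω₃` the change is `2ū` times `ν(F ∪ {ω₁, ω₂, ω₃}) - 3 ν(F ∪ {ω₂, ω₃}) + 3 ν(F ∪ {ω₃}) - ν(F)`.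
Prudence therefore makes this chain difference nonnegative, and its average over the three cyclic
rotations of `(ω₁, ω₂, ω₃)` is the third derivative.
-/

section Choquet

variable {Ω : Type*} [Fintype Ω]

lemma measurable_comp_upperLevel {β : Type*} [MeasurableSpace β] (ν : Finset Ω → β)
    (y : Ω → ℝ) :
    Measurable fun t : ℝ => ν (Finset.univ.filter fun ω => t ≤ y ω) := by
  let _ : MeasurableSpace (Finset Ω) := ⊤
  refine measurable_from_top.comp (measurable_to_countable' fun A => ?_)
  have fiber_eq : (fun t : ℝ => Finset.univ.filter fun ω => t ≤ y ω) ⁻¹' {A} =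
      {t | ∀ ω, t ≤ y ω ↔ ω ∈ A} := by
    ext t
    simp [Finset.ext_iff]
  rw [fiber_eq]
  exact measurableSet_setOfPred.2 <| Measurable.forall fun ω =>
    (measurableSet_setOfPred.1 measurableSet_Iic).iff measurable_const

lemma integrableOn_comp_upperLevel {ν : Finset Ω → ℝ} (hν : ν ∅ = 0) (y : Ω → ℝ) :
    IntegrableOn (fun t : ℝ => ν (Finset.univ.filter fun ω => t ≤ y ω)) (Set.Ioi 0) := by
  obtain ⟨M, hM⟩ := Finite.exists_le y
  obtain ⟨C, hC⟩ := Finite.exists_le fun A => ‖ν A‖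
  have integrableOn_Ioc : IntegrableOn
      (fun t : ℝ => ν (Finset.univ.filter fun ω => t ≤ y ω)) (Set.Ioc 0 M) :=
    Measure.integrableOn_of_bounded measure_Ioc_lt_top.ne
      (measurable_comp_upperLevel ν y).aestronglyMeasurable (.of_forall fun _ => hC _)
  refine integrableOn_Ioc.of_forall_sdiff_eq_zero measurableSet_Ioi fun t ht => ?_
  have hMt : M < t := by simpa [Set.mem_Ioi.1 ht.1] using ht.2
  rw [Finset.filter_false_of_mem fun ω _ => ((hM ω).trans_lt hMt).not_ge, hν]

lemma choquet_sub_choquet_of_forall_ne_eq [DecidableEq Ω] {ν : Finset Ω → ℝ}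
    (hν : ν ∅ = 0) {y z : Ω → ℝ} {ω : Ω} {L : Finset Ω} (hL : ω ∉ L)
    (hyz : ∀ x, x ≠ ω → z x = y x) (hy : 0 ≤ y ω) (hle : y ω ≤ z ω)
    (above : ∀ x ∈ L, z ω ≤ y x) (below : ∀ x ∉ L, x ≠ ω → y x ≤ y ω) :
    choquet ν z - choquet ν y = (z ω - y ω) * (ν (insert ω L) - ν L) := by
  have level_sub : ∀ t : ℝ,
      ν (Finset.univ.filter fun x => t ≤ z x) - ν (Finset.univ.filter fun x => t ≤ y x) =
        (Set.Ioc (y ω) (z ω)).indicator (fun _ => ν (insert ω L) - ν L) t := by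
    intro t
    by_cases ht : t ∈ Set.Ioc (y ω) (z ω)
    · have level_z : (Finset.univ.filter fun x => t ≤ z x) = insert ω L := by
        ext x
        rcases eq_or_ne x ω with rfl | hx <;> grind
      have level_y : (Finset.univ.filter fun x => t ≤ y x) = L := by
        ext x
        rcases eq_or_ne x ω with rfl | hx <;> grind
      rw [Set.indicator_of_mem ht, level_z, level_y]
    · have level_eq : (Finset.univ.filter fun x => t ≤ z x) =
          Finset.univ.filter fun x => t ≤ y x := by
        ext x
        rcases eq_or_ne x ω with rfl | hx <;> grind
      rw [Set.indicator_of_notMem ht, level_eq, sub_self]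
  have Ioc_subset : Set.Ioc (y ω) (z ω) ⊆ Set.Ioi 0 := fun t ht => hy.trans_lt ht.1
  calc
    choquet ν z - choquet ν y
      = ∫ t in Set.Ioi (0 : ℝ),
          (Set.Ioc (y ω) (z ω)).indicator (fun _ => ν (insert ω L) - ν L) t := by
        simp only [choquet, ← level_sub]
        exact (integral_sub (integrableOn_comp_upperLevel hν z)
          (integrableOn_comp_upperLevel hν y)).symm
    _ = (z ω - y ω) * (ν (insert ω L) - ν L) := by
        rw [setIntegral_indicator measurableSet_Ioc, Set.inter_eq_right.2 Ioc_subset]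
        simp [hle]

end Choquet

section ThirdDifference

variable {Ω : Type*} [DecidableEq Ω]

/-- The third finite difference of `ν` along the chain
`F ⊆ F ∪ {c} ⊆ F ∪ {b, c} ⊆ F ∪ {a, b, c}`. Unlike `thirdDeriv`, it depends on the order of the
states: the chain adds `c` first and `a` last. -/
def chainThirdDiff (ν : Finset Ω → ℝ) (a b c : Ω) (F : Finset Ω) : ℝ :=
  ν (F ∪ {a, b, c}) - 3 * ν (F ∪ {b, c}) + 3 * ν (F ∪ {c}) - ν F

lemma choquet_sub_choquet_eq_mul_chainThirdDiff [Fintype Ω] {ν : Finset Ω → ℝ} (hν : ν ∅ = 0)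
    {F : Finset Ω} {a b c : Ω} (ha : a ∉ F) (hb : b ∉ F) (hc : c ∉ F)
    (hab : a ≠ b) (hac : a ≠ c) (hbc : b ≠ c) {y : Ω → ℝ} {p q r δ : ℝ}
    (hδ : 0 ≤ δ) (hp : 0 ≤ p - δ) (hpq : p + δ ≤ q - 2 * δ) (hqr : q + 2 * δ ≤ r - δ)
    (above : ∀ x ∈ F, r + δ ≤ y x)
    (below : ∀ x ∉ F, x ≠ a → x ≠ b → x ≠ c → y x ≤ p - δ) :
    choquet ν (Function.update (Function.update (Function.update y a (p + δ)) b (q - 2 * δ)) c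
        (r + δ)) -
      choquet ν (Function.update (Function.update (Function.update y a (p - δ)) b (q + 2 * δ)) c
        (r - δ)) = 2 * δ * chainThirdDiff ν a b c F := by
  let w (s t u : ℝ) : Ω → ℝ := Function.update (Function.update (Function.update y a s) b t) c u
  have w_a (s t u : ℝ) : w s t u a = s := by simp [w, hab, hac]
  have w_b (s t u : ℝ) : w s t u b = t := by simp [w, hbc]
  have w_c (s t u : ℝ) : w s t u c = u := by simp [w]
  have w_off (s t u : ℝ) (x : Ω) (hxa : x ≠ a) (hxb : x ≠ b) (hxc : x ≠ c) : w s t u x = y x := by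
    simp [w, hxa, hxb, hxc]
  have raise_a : choquet ν (w (p + δ) (q + 2 * δ) (r - δ)) -
      choquet ν (w (p - δ) (q + 2 * δ) (r - δ)) =
        2 * δ * (ν (F ∪ {a, b, c}) - ν (F ∪ {b, c})) := by
    rw [choquet_sub_choquet_of_forall_ne_eq hν (ω := a) (L := F ∪ {b, c})] <;> grind
  have lower_b : choquet ν (w (p + δ) (q + 2 * δ) (r - δ)) -
      choquet ν (w (p + δ) (q - 2 * δ) (r - δ)) =
        4 * δ * (ν (F ∪ {b, c}) - ν (F ∪ {c})) := by
    rw [choquet_sub_choquet_of_forall_ne_eq hν (ω := b) (L := F ∪ {c})] <;> grind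
  have raise_c : choquet ν (w (p + δ) (q - 2 * δ) (r + δ)) -
      choquet ν (w (p + δ) (q - 2 * δ) (r - δ)) =
        2 * δ * (ν (F ∪ {c}) - ν F) := by
    rw [choquet_sub_choquet_of_forall_ne_eq hν (ω := c) (L := F)] <;> grind
  change choquet ν (w (p + δ) (q - 2 * δ) (r + δ)) -
    choquet ν (w (p - δ) (q + 2 * δ) (r - δ)) = _
  unfold chainThirdDiff
  linear_combination raise_a - lower_b + raise_c

lemma AmbiguityPrudentC.chainThirdDiff_nonneg [Fintype Ω] {ν : Finset Ω → ℝ}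
    (hAP : AmbiguityPrudentC (choquet ν)) (hν : ν ∅ = 0) {F : Finset Ω} {a b c : Ω}
    (ha : a ∉ F) (hb : b ∉ F) (hc : c ∉ F) (hab : a ≠ b) (hac : a ≠ c) (hbc : b ≠ c) :
    0 ≤ chainThirdDiff ν a b c F := by
  let y : Ω → ℝ := fun x =>
    if x ∈ F then 12 else if x = a then 2 else if x = b then 6 else if x = c then 10 else 0
  have prudent := hAP (F ∪ {a, b, c})ᶜ a b c 2 6 10 1 y (by simp) (by simp) (by simp) hab hac hbc
    (by norm_num) (by norm_num) (by norm_num) (by norm_num) (by norm_num) (by norm_num)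
    (by grind) (by grind) (by grind) (by grind)
    (by grind [Finset.mem_compl]) (by grind [Finset.mem_compl])
  have shift := choquet_sub_choquet_eq_mul_chainThirdDiff hν ha hb hc hab hac hbc
    (y := y) (p := 2) (q := 6) (r := 10) (δ := 1) (by norm_num) (by norm_num) (by norm_num)
    (by norm_num) (by grind) (by grind)
  linarith

lemma sum_powerset_triple {M : Type*} [AddCommMonoid M] (f : Finset Ω → M) {a b c : Ω}
    (hab : a ≠ b) (hac : a ≠ c) (hbc : b ≠ c) :
    ∑ C ∈ ({a, b, c} : Finset Ω).powerset, f C =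
      f ∅ + f {c} + (f {b} + f {b, c}) + (f {a} + f {a, c} + (f {a, b} + f {a, b, c})) := by
  have sum_powerset_singleton (g : Finset Ω → M) :
      ∑ C ∈ ({c} : Finset Ω).powerset, g C = g ∅ + g {c} := by
    rw [← insert_empty_eq c, Finset.sum_powerset_insert (Finset.notMem_empty c)]
    simp
  simp [Finset.sum_powerset_insert, sum_powerset_singleton, hab, hac, hbc]

lemma three_mul_thirdDeriv_eq_sum_chainThirdDiff (ν : Finset Ω → ℝ) {a b c : Ω}
    (hab : a ≠ b) (hac : a ≠ c) (hbc : b ≠ c) (A : Finset Ω) :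
    3 * thirdDeriv ν a b c A = chainThirdDiff ν a b c (A \ {a, b, c}) +
      chainThirdDiff ν b c a (A \ {a, b, c}) + chainThirdDiff ν c a b (A \ {a, b, c}) := by
  have rotate_bca : ({b, c, a} : Finset Ω) = {a, b, c} := by grind
  have rotate_cab : ({c, a, b} : Finset Ω) = {a, b, c} := by grind
  have card_triple : ({a, b, c} : Finset Ω).card = 3 :=
    Finset.card_eq_three.2 ⟨a, b, c, hab, hac, hbc, rfl⟩
  simp only [chainThirdDiff, rotate_bca, rotate_cab]
  rw [thirdDeriv, sum_powerset_triple _ hab hac hbc, Finset.pair_comm c a]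
  simp only [Finset.card_empty, Finset.card_singleton, Finset.card_pair hab, Finset.card_pair hac,
    Finset.card_pair hbc, card_triple, Finset.union_empty]
  ring

end ThirdDifference

theorem CEU_ambiguityPrudent_implies_thirdDeriv_nonneg_general
    {Ω : Type*} [Fintype Ω] [DecidableEq Ω] (ν : Finset Ω → ℝ) (hν0 : ν ∅ = 0)
    (hAP : AmbiguityPrudentC (choquet ν)) (A : Finset Ω) (ω₁ ω₂ ω₃ : Ω)
    (h₁₂ : ω₁ ≠ ω₂) (h₁₃ : ω₁ ≠ ω₃) (h₂₃ : ω₂ ≠ ω₃) :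
    0 ≤ thirdDeriv ν ω₁ ω₂ ω₃ A := by
  have average := three_mul_thirdDeriv_eq_sum_chainThirdDiff ν h₁₂ h₁₃ h₂₃ A
  have h₁ : ω₁ ∉ A \ {ω₁, ω₂, ω₃} := by simp
  have h₂ : ω₂ ∉ A \ {ω₁, ω₂, ω₃} := by simp
  have h₃ : ω₃ ∉ A \ {ω₁, ω₂, ω₃} := by simp
  have nonneg₁₂₃ := hAP.chainThirdDiff_nonneg hν0 h₁ h₂ h₃ h₁₂ h₁₃ h₂₃
  have nonneg₂₃₁ := hAP.chainThirdDiff_nonneg hν0 h₂ h₃ h₁ h₂₃ h₁₂.symm h₁₃.symm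
  have nonneg₃₁₂ := hAP.chainThirdDiff_nonneg hν0 h₃ h₁ h₂ h₁₃.symm h₂₃.symm h₁₂
  linarith

/-- If the Choquet integral of a capacity ν (with ν(S)=1) on a finite set with
at least three elements is ambiguity prudent, then the third derivative of ν is nonnegative. -/
theorem CEU_ambiguityPrudent_implies_thirdDeriv_nonneg
    {Ω : Type*} [Fintype Ω] [DecidableEq Ω]
    (hcard : 3 ≤ Fintype.card Ω)
    (ν : Finset Ω → ℝ) (hν0 : ν ∅ = 0) (hν1 : ν Finset.univ = 1)
    (hmono : ∀ A B : Finset Ω, A ⊆ B → ν A ≤ ν B)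
    (hAP : AmbiguityPrudentC (choquet ν)) :
    ∀ (A : Finset Ω) (ω₁ ω₂ ω₃ : Ω), ω₁ ≠ ω₂ → ω₁ ≠ ω₃ → ω₂ ≠ ω₃ →
      0 ≤ thirdDeriv ν ω₁ ω₂ ω₃ A :=
  CEU_ambiguityPrudent_implies_thirdDeriv_nonneg_general ν hν0 hAP
end
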